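/- arXiv:1104.1209 — 2 statements merged into one kernel-verified Lean document; each statement's English description precedes it below -/
import Mathlib

section
/- There exist absolute constants c₀ ∈ (0,1) and C > 1 such that for every positive integer d and every real θ with 0 < θ ≤ c₀/d, there exist real numbers c_0, c_1, …, c_{2d+1}, not all zero, with |c_m| ≤ C^d for every m and with Σ_{m=0}^{2d+1} c_m = 0, such that for every polynomial p of degree at most d on ℝ^n and every X ∈ ℝ^n, Σ_{m=0}^{2d+1} c_m · (A^θ)^m p(X) = 0. -/
open MeasureTheory ProbabilityTheory

/-- The standard Gaussian measure on `ℝ^n`. -/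
noncomputable def stdGaussian (n : ℕ) : Measure (Fin n → ℝ) :=
  Measure.pi fun _ => gaussianReal 0 1

/-- `N_Y^θ(X) = cos θ · X + sin θ · Y`. -/
noncomputable def noisy {n : ℕ} (θ : ℝ) (Y X : Fin n → ℝ) : Fin n → ℝ :=
  Real.cos θ • X + Real.sin θ • Y

/-- The noisy derivative `D_{Y,Z}^θ f (X)`. -/
noncomputable def noisyDeriv {n : ℕ} (θ : ℝ) (Y Z : Fin n → ℝ)
    (f : (Fin n → ℝ) → ℝ) (X : Fin n → ℝ) : ℝ :=
  (f (noisy θ Y X) - f (noisy θ Z X)) / θ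

/-- `|f_θ^{(ℓ)}(X)|₂²`, the mean square of the `ℓ`-fold noisy derivative over
independent standard Gaussian directions. -/
noncomputable def derivNormSq (n : ℕ) (θ : ℝ) : ℕ → ((Fin n → ℝ) → ℝ) → (Fin n → ℝ) → ℝ
  | 0, f, X => (f X) ^ 2
  | (ℓ+1), f, X =>
      ∫ YZ : (Fin n → ℝ) × (Fin n → ℝ),
        derivNormSq n θ ℓ (noisyDeriv θ YZ.1 YZ.2 f) X
        ∂((stdGaussian n).prod (stdGaussian n))

/-- The averaging operator `A^θ f (X) = E_Y[f(N_Y^θ(X))]`. -/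
noncomputable def avgOp (n : ℕ) (θ : ℝ) (f : (Fin n → ℝ) → ℝ) (X : Fin n → ℝ) : ℝ :=
  ∫ Y, f (noisy θ Y X) ∂(stdGaussian n)

/-- `q_{ℓ,m}(X) = |p_θ^{(ℓ),m}(X)|₂² = (A^θ)^m |p_θ^{(ℓ)}(X)|₂²`. -/
noncomputable def qlm (n : ℕ) (θ : ℝ) (p : MvPolynomial (Fin n) ℝ) (ℓ m : ℕ)
    (X : Fin n → ℝ) : ℝ :=
  (avgOp n θ)^[m] (derivNormSq n θ ℓ (fun W => MvPolynomial.eval W p)) X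

/-- The Gaussian `L^k` norm of a function on `ℝ^n`. -/
noncomputable def gaussNorm (n : ℕ) (k : ℝ) (p : (Fin n → ℝ) → ℝ) : ℝ :=
  (∫ X, |p X| ^ k ∂(stdGaussian n)) ^ (1 / k)

/-- `f` is a degree-`d` polynomial threshold function on `ℝ^n`. -/
def isPTF (n d : ℕ) (f : (Fin n → ℝ) → ℝ) : Prop :=
  ∃ p : MvPolynomial (Fin n) ℝ, p.totalDegree ≤ d ∧
    ∀ x, f x = Real.sign (MvPolynomial.eval x p)

/-- `X` is a `k`-independent family of standard Gaussians: any `m ≤ k` distinct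
coordinates are jointly distributed as `m` independent standard Gaussians. -/
def kIndepGaussian {Ω : Type} [MeasurableSpace Ω] (n k : ℕ) (P : Measure Ω)
    (X : Ω → (Fin n → ℝ)) : Prop :=
  ∀ m : ℕ, m ≤ k → ∀ ι : Fin m → Fin n, Function.Injective ι →
    Measure.map (fun ω i => X ω (ι i)) P = Measure.pi fun _ : Fin m => gaussianReal 0 1

/-!
Substituting `ax + by` into a polynomial of degree `k` multiplies its part of degree `k` in `x` by
`a ^ k`; all other terms have lower degree in `x`, and averaging over `y` does not change this.
Hence averaging is triangular on the polynomials of degree at most `d`, with eigenvalues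
`1, a, …, a ^ d`, and is annihilated by `∏_{j ≤ d} (t - a ^ j)`. The coefficients of this polynomial
are the `c_m`: they sum to its value at the root `1`, and `|a| ≤ 1` bounds them by the binomial
coefficients `(d + 1).choose m ≤ 2 ^ d`.
-/

open scoped TensorProduct

section Annihilator

open Polynomial

variable {R : Type*} [CommRing R]

lemma aeval_prod_X_sub_C_apply_eq_zero {M : Type*} [AddCommGroup M] [Module R M]
    (T : Module.End R M) (r : ℕ → R) (V : ℕ → Submodule R M) (hV₀ : V 0 = ⊥)
    (hV : ∀ k, ∀ v ∈ V (k + 1), T v - r k • v ∈ V k) (k : ℕ) {v : M} (hv : v ∈ V k) :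
    aeval T (∏ j ∈ Finset.range k, (X - C (r j))) v = 0 := by
  induction k generalizing v with
  | zero =>
    obtain rfl : v = 0 := by simpa [hV₀] using hv
    exact map_zero _
  | succ k ih =>
    rw [Finset.prod_range_succ, map_mul, Module.End.mul_apply]
    apply ih
    simpa using hV k v hv

lemma norm_coeff_prod_X_sub_C_le {ι K : Type*} [NormedField K] (s : Finset ι) (r : ι → K) {B : ℝ}
    (hr : ∀ j ∈ s, ‖r j‖ ≤ B) (m : ℕ) :
    ‖(∏ j ∈ s, (X - C (r j))).coeff m‖ ≤ B ^ (s.card - m) * s.card.choose m := by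
  have hsplits : (∏ j ∈ s, (X - C (r j))).Splits := .prod fun j _ ↦ .X_sub_C (r j)
  have hroots : ∀ z ∈ (∏ j ∈ s, (X - C (r j))).roots, ‖z‖ ≤ B := by
    intro z hz
    obtain ⟨j, hj, hzj⟩ := Finset.prod_eq_zero_iff.1 <|
      (eval_prod _ _ _).symm.trans (isRoot_of_mem_roots hz)
    obtain rfl : z = r j := by
      simpa only [eval_sub, eval_X, eval_C, sub_eq_zero] using hzj
    exact hr j hj
  simpa only [map_id, natDegree_finsetProd_X_sub_C_eq_card] using
    coeff_le_of_roots_le (f := RingHom.id K) m (monic_prod_X_sub_C r s)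
      (by rwa [map_id]) (by rwa [map_id])

/-- The monic polynomial with roots `1, a, …, a ^ d`, which are the eigenvalues of an averaging
operator on the polynomials of degree at most `d`. -/
noncomputable def geomRootsPoly (a : R) (d : ℕ) : R[X] :=
  ∏ j ∈ Finset.range (d + 1), (X - C (a ^ j))

lemma monic_geomRootsPoly (a : R) (d : ℕ) : (geomRootsPoly a d).Monic :=
  monic_prod_X_sub_C _ _

lemma natDegree_geomRootsPoly [Nontrivial R] (a : R) (d : ℕ) :
    (geomRootsPoly a d).natDegree = d + 1 :=
  (natDegree_finsetProd_X_sub_C_eq_card _ _).trans (Finset.card_range _)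

lemma eval_one_geomRootsPoly (a : R) (d : ℕ) :
    (geomRootsPoly a d).eval 1 = 0 := by
  simp [geomRootsPoly, eval_prod, Finset.prod_range_succ']

lemma norm_coeff_geomRootsPoly_le {K : Type*} [NormedField K] {a : K} (ha : ‖a‖ ≤ 1) (d m : ℕ) :
    ‖(geomRootsPoly a d).coeff m‖ ≤ 2 ^ d := by
  have hroot (j : ℕ) : ‖a ^ j‖ ≤ 1 := by
    rw [norm_pow]
    exact pow_le_one₀ (norm_nonneg a) ha
  calc
    ‖(geomRootsPoly a d).coeff m‖
        ≤ 1 ^ ((Finset.range (d + 1)).card - m) * (Finset.range (d + 1)).card.choose m :=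
      norm_coeff_prod_X_sub_C_le _ _ (fun j _ ↦ hroot j) m
    _ = (d + 1).choose m := by rw [one_pow, one_mul, Finset.card_range]
    _ ≤ 2 ^ d := mod_cast Nat.choose_succ_le_two_pow d m

end Annihilator

section AffineExpect

open MvPolynomial

variable {σ R : Type*} [CommRing R]

/-- The polynomials of total degree `< k`. The bound is strict so that the filtration starts at the
zero module. -/
noncomputable def totalDegreeLT (σ R : Type*) [CommRing R] (k : ℕ) :
    Submodule R (MvPolynomial σ R) :=
  restrictSupport R {s | s.degree < k}

lemma totalDegreeLT_zero : totalDegreeLT σ R 0 = ⊥ := by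
  simp [totalDegreeLT, restrictSupport_eq_span]

lemma totalDegreeLT_mono : Monotone (totalDegreeLT σ R) := fun _ _ hkl ↦
  restrictSupport_mono R fun _ hs ↦ lt_of_lt_of_le hs hkl

lemma mem_totalDegreeLT_succ {k : ℕ} {p : MvPolynomial σ R} :
    p ∈ totalDegreeLT σ R (k + 1) ↔ p.totalDegree ≤ k := by
  rw [← mem_restrictTotalDegree]
  simp only [totalDegreeLT, restrictTotalDegree, Nat.lt_succ_iff]
  rfl

lemma monomial_mem_totalDegreeLT {s : σ →₀ ℕ} {k : ℕ} (hs : s.degree < k) (r : R) :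
    monomial s r ∈ totalDegreeLT σ R k :=
  (monomial_mem_restrictSupport R).2 (.inl hs)

lemma mul_X_mem_totalDegreeLT {k : ℕ} {p : MvPolynomial σ R} (hp : p ∈ totalDegreeLT σ R k)
    (i : σ) : p * X i ∈ totalDegreeLT σ R (k + 1) := by
  cases k with
  | zero => simp_all [totalDegreeLT_zero]
  | succ k =>
    rw [mem_totalDegreeLT_succ] at hp ⊢
    have hX : (X i : MvPolynomial σ R).totalDegree ≤ 1 := by
      simpa [X] using totalDegree_monomial_le (Finsupp.single i 1) (1 : R)
    exact (totalDegree_mul p (X i)).trans (add_le_add hp hX)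

/-- The substitution `p ↦ p(ax + by)`, a polynomial in two families of variables. The left tensor
factor holds the polynomials in `x`, the right one those in `y`. -/
noncomputable def affineSubst (a b : R) :
    MvPolynomial σ R →ₐ[R] MvPolynomial σ R ⊗[R] MvPolynomial σ R :=
  aeval fun i ↦ a • X i ⊗ₜ 1 + b • 1 ⊗ₜ X i

/-- The averaging operator `p ↦ E_y[p(ax + by)]` on polynomials, for an arbitrary linear functional
`E` in place of the expectation. -/
noncomputable def affineExpect (E : MvPolynomial σ R →ₗ[R] R) (a b : R) :
    Module.End R (MvPolynomial σ R) :=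
  (TensorProduct.rid R (MvPolynomial σ R)).toLinearMap ∘ₗ E.lTensor _ ∘ₗ
    (affineSubst a b).toLinearMap

variable (E : MvPolynomial σ R →ₗ[R] R) (a b : R)

lemma affineExpect_C (r : R) : affineExpect E a b (C r) = C (r * E 1) := by
  rw [← algebraMap_eq, Algebra.algebraMap_eq_smul_one, map_smul]
  simp [affineExpect, Algebra.TensorProduct.one_def, Algebra.smul_def]

-- The factor `y_i` is absorbed into the functional, so inductions on `p` must generalize over `E`.
lemma affineExpect_mul_X (p : MvPolynomial σ R) (i : σ) :
    affineExpect E a b (p * X i) =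
      a • (affineExpect E a b p * X i) +
        b • affineExpect (E ∘ₗ LinearMap.mulRight R (X i)) a b p := by
  have htmul (p q : MvPolynomial σ R) :
      TensorProduct.rid R _ (E.lTensor _ (p ⊗ₜ[R] q * (a • X i ⊗ₜ[R] 1 + b • 1 ⊗ₜ[R] X i))) =
        a • (E q • p * X i) + b • E (q * X i) • p := by
    rw [mul_add, mul_smul_comm, mul_smul_comm, Algebra.TensorProduct.tmul_mul_tmul,
      Algebra.TensorProduct.tmul_mul_tmul]
    simp
  have htensor (t : MvPolynomial σ R ⊗[R] MvPolynomial σ R) :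
      TensorProduct.rid R _ (E.lTensor _ (t * (a • X i ⊗ₜ 1 + b • 1 ⊗ₜ X i))) =
        a • (TensorProduct.rid R _ (E.lTensor _ t) * X i) +
          b • TensorProduct.rid R _ ((E ∘ₗ LinearMap.mulRight R (X i)).lTensor _ t) := by
    induction t with
    | zero => simp
    | tmul p q => simpa using htmul p q
    | add t u ht hu =>
      simp only [add_mul, map_add, ht, hu, smul_add]
      abel
  simpa [affineExpect, affineSubst] using htensor (affineSubst a b p)

lemma eval_affineExpect (x : σ → R) (p : MvPolynomial σ R) :
    eval x (affineExpect E a b p) = E (bind₁ (fun i ↦ C (a * x i) + C b * X i) p) := by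
  induction p using MvPolynomial.induction_on generalizing E with
  | C r => simpa [affineExpect_C, Algebra.smul_def] using (E.map_smul r 1).symm
  | add p q hp hq => simp [hp, hq]
  | mul_X p i ih =>
    have hsplit (q : MvPolynomial σ R) :
        q * (C (a * x i) + C b * X i) = (a * x i) • q + b • (q * X i) := by
      simp only [← C_mul']
      ring
    rw [affineExpect_mul_X, map_add, smul_eval, smul_eval, map_mul, eval_X, ih, ih, map_mul,
      bind₁_X_right, hsplit, map_add, map_smul, map_smul, LinearMap.comp_apply,
      LinearMap.mulRight_apply, smul_eq_mul, smul_eq_mul]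
    ring

lemma affineExpect_monomial_sub_mem (s : σ →₀ ℕ) :
    affineExpect E a b (monomial s 1) - (E 1 * a ^ s.degree) • monomial s 1 ∈
      totalDegreeLT σ R s.degree := by
  classical
  obtain ⟨m, rfl⟩ := Multiset.toFinsupp.surjective s
  induction m using Multiset.induction generalizing E with
  | empty =>
    have hone : affineExpect E a b 1 = C (E 1) := by simpa using affineExpect_C E a b 1
    simp [hone, Algebra.smul_def]
  | cons i m ih =>
    set s := Multiset.toFinsupp m
    have hs : Multiset.toFinsupp (i ::ₘ m) = s + Finsupp.single i 1 := by
      rw [← Multiset.singleton_add, map_add, Multiset.toFinsupp_singleton, add_comm]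
    set E' := E ∘ₗ LinearMap.mulRight R (X i)
    have hdegree : (s + Finsupp.single i 1).degree = s.degree + 1 := by simp
    have hlead := mul_X_mem_totalDegreeLT (ih E) i
    have hlower : affineExpect E' a b (monomial s 1) ∈ totalDegreeLT σ R (s.degree + 1) :=
      (Submodule.sub_mem_iff_left _ <| Submodule.smul_mem _ _ <|
        monomial_mem_totalDegreeLT s.degree.lt_succ_self 1).1
          (totalDegreeLT_mono s.degree.le_succ (ih E'))
    rw [hs, hdegree, monomial_add_single, pow_one, affineExpect_mul_X]
    convert add_mem (Submodule.smul_mem _ a hlead) (Submodule.smul_mem _ b hlower) using 1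
    simp only [sub_mul, smul_sub, smul_mul_assoc, smul_smul, pow_succ]
    rw [mul_comm a, mul_assoc]
    abel

lemma affineExpect_sub_mem {k : ℕ} {p : MvPolynomial σ R} (hp : p ∈ totalDegreeLT σ R (k + 1)) :
    affineExpect E a b p - (E 1 * a ^ k) • p ∈ totalDegreeLT σ R k := by
  rw [totalDegreeLT, restrictSupport_eq_span] at hp
  induction hp using Submodule.span_induction with
  | mem p hp =>
    obtain ⟨s, hs, rfl⟩ := hp
    rcases (Nat.lt_succ_iff.1 hs).eq_or_lt with rfl | hlt
    · exact affineExpect_monomial_sub_mem E a b s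
    · have hmono : monomial s 1 ∈ totalDegreeLT σ R k := monomial_mem_totalDegreeLT hlt 1
      have hlower : affineExpect E a b (monomial s 1) ∈ totalDegreeLT σ R k :=
        (Submodule.sub_mem_iff_left _ (Submodule.smul_mem _ _ hmono)).1
          (totalDegreeLT_mono hlt.le (affineExpect_monomial_sub_mem E a b s))
      exact sub_mem hlower (Submodule.smul_mem _ _ hmono)
  | zero => simp
  | add p q _ _ hp hq => simpa only [map_add, smul_add, add_sub_add_comm] using add_mem hp hq
  | smul r p _ hp =>
    simpa only [map_smul, smul_comm _ r, ← smul_sub] using Submodule.smul_mem _ r hp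

lemma aeval_affineExpect_geomRootsPoly (hE : E 1 = 1) {d : ℕ} {p : MvPolynomial σ R}
    (hp : p.totalDegree ≤ d) :
    Polynomial.aeval (affineExpect E a b) (geomRootsPoly a d) p = 0 := by
  refine aeval_prod_X_sub_C_apply_eq_zero _ (a ^ ·) (totalDegreeLT σ R) totalDegreeLT_zero
    (fun k q hq ↦ ?_) (d + 1) (mem_totalDegreeLT_succ.2 hp)
  simpa [hE] using affineExpect_sub_mem E a b hq

end AffineExpect

section NoiseAvg

open MvPolynomial

variable {σ : Type*}

/-- The averaging operator `f ↦ E_y[f(ax + by)]` for noise `y` of law `μ`; `avgOp` is the Gaussian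
case `a = cos θ`, `b = sin θ`. -/
noncomputable def noiseAvg (μ : Measure (σ → ℝ)) (a b : ℝ) (f : (σ → ℝ) → ℝ) (x : σ → ℝ) : ℝ :=
  ∫ y, f (a • x + b • y) ∂μ

variable {μ : Measure (σ → ℝ)} (hμ : ∀ p : MvPolynomial σ ℝ, Integrable (fun y ↦ eval y p) μ)

/-- The expectation `p ↦ E_y[p(y)]` as a linear functional on polynomials, for a law whose
polynomial moments are all finite. -/
noncomputable def momentFunctional : MvPolynomial σ ℝ →ₗ[ℝ] ℝ where
  toFun p := ∫ y, eval y p ∂μ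
  map_add' p q := by simpa using integral_add (hμ p) (hμ q)
  map_smul' r p := by simpa using integral_const_mul r _

lemma momentFunctional_one [IsProbabilityMeasure μ] : momentFunctional hμ 1 = 1 := by
  simp [momentFunctional]

lemma noiseAvg_eval (a b : ℝ) (p : MvPolynomial σ ℝ) :
    noiseAvg μ a b (fun y ↦ eval y p) =
      fun x ↦ eval x (affineExpect (momentFunctional hμ) a b p) := by
  funext x
  have hsubst (y : σ → ℝ) :
      eval y (bind₁ (fun i ↦ C (a * x i) + C b * X i) p) =
        eval (a • x + b • y) p := by
    simp only [← coe_aeval_eq_eval, RingHom.coe_coe, aeval_bind₁]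
    simp [Pi.add_def]
  rw [eval_affineExpect]
  exact integral_congr_ae (.of_forall fun y ↦ (hsubst y).symm)

lemma noiseAvg_iterate_eval (a b : ℝ) (m : ℕ) (p : MvPolynomial σ ℝ) :
    (noiseAvg μ a b)^[m] (fun y ↦ eval y p) =
      fun x ↦ eval x ((affineExpect (momentFunctional hμ) a b ^ m) p) := by
  induction m with
  | zero => simp
  | succ m ih =>
    simp only [Function.iterate_succ_apply', ih, noiseAvg_eval hμ, pow_succ',
      Module.End.mul_apply]

end NoiseAvg

section StdGaussian

open MvPolynomial

lemma integrable_pow_gaussianReal (μ : ℝ) (v : NNReal) (k : ℕ) :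
    Integrable (fun y ↦ y ^ k) (gaussianReal μ v) := by
  rw [← integrable_norm_iff (by fun_prop)]
  simpa using (memLp_id_gaussianReal (μ := μ) (v := v) k).integrable_norm_pow'

lemma integrable_eval_stdGaussian {n : ℕ} (p : MvPolynomial (Fin n) ℝ) :
    Integrable (fun y ↦ eval y p) (_root_.stdGaussian n) := by
  simp only [eval_eq']
  exact integrable_finsetSum _ fun s _ ↦ .const_mul
    (.fintype_prod (f := fun i y ↦ y ^ s i) fun i ↦ integrable_pow_gaussianReal 0 1 (s i)) _

instance (n : ℕ) : IsProbabilityMeasure (_root_.stdGaussian n) :=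
  inferInstanceAs (IsProbabilityMeasure (Measure.pi _))

lemma avgOp_eq_noiseAvg (n : ℕ) (θ : ℝ) :
    avgOp n θ = noiseAvg (_root_.stdGaussian n) (Real.cos θ) (Real.sin θ) :=
  rfl

end StdGaussian

theorem stmt13_general (d : ℕ) {N : ℕ} (hN : d + 1 < N) {a : ℝ} (ha : |a| ≤ 1) :
    ∃ c : Fin N → ℝ, c ≠ 0 ∧ (∀ m, |c m| ≤ 2 ^ d) ∧ ∑ m, c m = 0 ∧
      ∀ {σ : Type*} {μ : Measure (σ → ℝ)} [IsProbabilityMeasure μ],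
        (∀ p : MvPolynomial σ ℝ, Integrable (fun y ↦ MvPolynomial.eval y p) μ) →
          ∀ (b : ℝ) (p : MvPolynomial σ ℝ), p.totalDegree ≤ d → ∀ x : σ → ℝ,
            ∑ m, c m * (noiseAvg μ a b)^[m] (fun y ↦ MvPolynomial.eval y p) x = 0 := by
  have hdeg : (geomRootsPoly a d).natDegree < N := (natDegree_geomRootsPoly a d).trans_lt hN
  refine ⟨fun m ↦ (geomRootsPoly a d).coeff m, fun hzero ↦ ?_,
    fun m ↦ norm_coeff_geomRootsPoly_le (K := ℝ) ha d m, ?_, fun {σ μ} _ hμ b p hp x ↦ ?_⟩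
  · exact (monic_geomRootsPoly a d).ne_zero
      (Polynomial.leadingCoeff_eq_zero.1 (congrFun hzero ⟨_, hdeg⟩))
  · have hone := eval_one_geomRootsPoly a d
    rw [Polynomial.eval_eq_sum_range' hdeg, Finset.sum_range] at hone
    simpa using hone
  · have hann := aeval_affineExpect_geomRootsPoly (momentFunctional hμ) a b
      (momentFunctional_one hμ) hp
    rw [Polynomial.aeval_eq_sum_range' hdeg, Finset.sum_range] at hann
    simpa [noiseAvg_iterate_eval hμ, LinearMap.sum_apply] using congrArg (MvPolynomial.eval x) hann

/-- Linear relation among iterated averages of a degree-`d` polynomial: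
there are bounded constants `c_0, …, c_{2d+1}`, not all zero, summing to zero,
with `Σ_m c_m (A^θ)^m p(X) = 0`. -/
theorem stmt13 :
    ∃ c₀ ∈ Set.Ioo (0:ℝ) 1, ∃ C > (1:ℝ),
      ∀ d : ℕ, 0 < d → ∀ θ : ℝ, 0 < θ → θ ≤ c₀ / d →
        ∃ c : Fin (2*d+2) → ℝ, c ≠ 0 ∧ (∀ m, |c m| ≤ C ^ d) ∧ (∑ m, c m = 0) ∧
          ∀ (n : ℕ) (p : MvPolynomial (Fin n) ℝ), p.totalDegree ≤ d →
            ∀ X : Fin n → ℝ,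
              ∑ m : Fin (2*d+2),
                c m * (avgOp n θ)^[(m : ℕ)] (fun W => MvPolynomial.eval W p) X = 0 := by
  refine ⟨1 / 2, by norm_num, 2, by norm_num, fun d _ θ _ _ ↦ ?_⟩
  obtain ⟨c, hc, hbound, hsum, hrel⟩ :=
    stmt13_general d (show d + 1 < 2 * d + 2 by lia) (Real.abs_cos_le_one θ)
  exact ⟨c, hc, hbound, hsum, fun n ↦
    avgOp_eq_noiseAvg n θ ▸ hrel integrable_eval_stdGaussian (Real.sin θ)⟩
end

section
/- There exist an absolute constant α ∈ (0,1) and an absolute constant K > 1 such that for every positive integer d there exists θ₀(d) > 0 with the following property. Let 0 < θ ≤ θ₀(d), let p be a polynomial of degree at most d on ℝ^n, let X ∈ ℝ^n, and let ℓ be a nonnegative integer. Suppose that for every m with 1 ≤ m ≤ 4d the quantities |p_θ^{(ℓ),m}(X)|_2² and |p_θ^{(ℓ),m+1}(X)|_2² are positive and |log( |p_θ^{(ℓ),m}(X)|_2² / |p_θ^{(ℓ),m+1}(X)|_2² )| < α^d. Then for all m, m' with 0 ≤ m, m' ≤ 4d+1, |p_θ^{(ℓ),m}(X)|_2² ≤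 K · |p_θ^{(ℓ),m'}(X)|_2². -/
open MeasureTheory ProbabilityTheory

/-
On polynomials of degree `≤ k` the averaging operator `A = A^θ` is triangular with respect to the
degree, with diagonal entries `cos θ ^ i`, `i ≤ k`. Hence `A f - cos θ ^ k • f` has smaller degree
than `f`, and, as long as `cos θ ^ k ≥ 1/2`, an induction on the degree bounds `f X` by
`4 ^ (k + 1)` times any common bound for `A^j f X`, `1 ≤ j ≤ k + 1`. The function `|p_θ^{(ℓ)}|₂²` is
a polynomial of degree `≤ 2d`, so this applies with `k = 2d` to its difference from the constant
`q_{ℓ,1}(X)`: the hypothesis makes `A^j` of that difference tiny at `X` for `j ≥ 1`, hence also for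
`j = 0`.
-/

section PolynomialFunctions

lemma exists_eq_add_single_one {σ : Type*} {s : σ →₀ ℕ} (hs : s ≠ 0) :
    ∃ t i, s = t + Finsupp.single i 1 := by
  obtain ⟨i, hi⟩ := Finsupp.ne_iff.mp hs
  exact ⟨s - Finsupp.single i 1, i,
    (tsub_add_cancel_of_le (Finsupp.single_le_iff.mpr (Nat.one_le_iff_ne_zero.mpr hi))).symm⟩

variable {σ R : Type*} [Fintype σ] [CommRing R]

/-- The monomial with exponent `s`, as a function. -/
def monomialFun (s : σ →₀ ℕ) (x : σ → R) : R := ∏ i, x i ^ s i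

variable (σ R) in
/-- The polynomial functions of total degree `< k` on `σ → R`. The bound is strict, as in
`Polynomial.degreeLT`, so that `polyFunLT σ R 0 = ⊥` is the base case of inductions on degree. -/
def polyFunLT (k : ℕ) : Submodule R ((σ → R) → R) :=
  Submodule.span R (monomialFun '' {s | s.degree < k})

lemma monomialFun_zero : (monomialFun 0 : (σ → R) → R) = 1 := by
  ext x
  simp [monomialFun]

lemma monomialFun_add (s t : σ →₀ ℕ) :
    (monomialFun (s + t) : (σ → R) → R) = monomialFun s * monomialFun t := by
  ext x
  simp [monomialFun, pow_add, Finset.prod_mul_distrib]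

lemma monomialFun_single_one (i : σ) :
    (monomialFun (Finsupp.single i 1) : (σ → R) → R) = fun x => x i := by
  classical
  ext x
  simp [monomialFun, Finsupp.single_apply, pow_ite, Finset.prod_ite_eq]

lemma monomialFun_mem_polyFunLT {s : σ →₀ ℕ} {k : ℕ} (hs : s.degree < k) :
    (monomialFun s : (σ → R) → R) ∈ polyFunLT σ R k :=
  Submodule.subset_span ⟨s, hs, rfl⟩

lemma polyFunLT_le_iff {k : ℕ} {W : Submodule R ((σ → R) → R)} :
    polyFunLT σ R k ≤ W ↔ ∀ s : σ →₀ ℕ, s.degree < k → monomialFun s ∈ W :=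
  Submodule.span_le.trans Set.forall_mem_image

lemma polyFunLT_mono {j k : ℕ} (h : j ≤ k) : polyFunLT σ R j ≤ polyFunLT σ R k :=
  polyFunLT_le_iff.mpr fun _ hs => monomialFun_mem_polyFunLT (hs.trans_le h)

lemma eq_zero_of_mem_polyFunLT_zero {f : (σ → R) → R} (hf : f ∈ polyFunLT σ R 0) : f = 0 := by
  simpa [polyFunLT] using hf

lemma const_mem_polyFunLT (k : ℕ) (v : R) : (fun _ => v) ∈ polyFunLT σ R (k + 1) := by
  have h := (polyFunLT σ R (k + 1)).smul_mem v (monomialFun_mem_polyFunLT (s := 0) (by simp))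
  rw [monomialFun_zero] at h
  convert h using 1
  ext x
  simp

lemma coord_mem_polyFunLT (i : σ) : (fun x => x i) ∈ polyFunLT σ R 2 := by
  rw [← monomialFun_single_one]
  exact monomialFun_mem_polyFunLT (by simp)

lemma mul_mem_polyFunLT {j k : ℕ} {f g : (σ → R) → R} (hf : f ∈ polyFunLT σ R j)
    (hg : g ∈ polyFunLT σ R (k + 1)) : f * g ∈ polyFunLT σ R (j + k) := by
  have hle : polyFunLT σ R j * polyFunLT σ R (k + 1) ≤ polyFunLT σ R (j + k) := by
    rw [polyFunLT, polyFunLT, Submodule.span_mul_span, Submodule.span_le]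
    rintro _ ⟨_, ⟨s, hs, rfl⟩, _, ⟨t, ht, rfl⟩, rfl⟩
    simp only [Set.mem_ofPred_eq] at hs ht
    change monomialFun s * monomialFun t ∈ _
    rw [← monomialFun_add]
    exact monomialFun_mem_polyFunLT (by rw [map_add]; omega)
  exact hle (Submodule.mul_mem_mul hf hg)

lemma eval_mem_polyFunLT {p : MvPolynomial σ R} {k : ℕ} (hp : p.totalDegree < k) :
    (fun x => MvPolynomial.eval x p) ∈ polyFunLT σ R k := by
  have heval : (fun x => MvPolynomial.eval x p) = ∑ s ∈ p.support, p.coeff s • monomialFun s := by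
    ext x
    simp [MvPolynomial.eval_eq', monomialFun]
  rw [heval]
  exact Submodule.sum_mem _ fun s hs => Submodule.smul_mem _ _ <|
    monomialFun_mem_polyFunLT ((MvPolynomial.le_totalDegree hs).trans_lt hp)

lemma comp_affine_mul_coord_sub_mem_polyFunLT (a : R) (b : σ → R) {k : ℕ} {g : (σ → R) → R}
    (hg : g ∈ polyFunLT σ R (k + 1))
    (hlower : (fun x => g (a • x + b)) - a ^ k • g ∈ polyFunLT σ R k) (i : σ) :
    (fun x => g (a • x + b) * (a • x + b) i) - a ^ (k + 1) • (g * fun x => x i) ∈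
      polyFunLT σ R (k + 1) := by
  have hcomp : (fun x => g (a • x + b)) ∈ polyFunLT σ R (k + 1) := by
    simpa only [sub_add_cancel] using
      add_mem (polyFunLT_mono k.le_succ hlower) (Submodule.smul_mem _ (a ^ k) hg)
  have hsplit := add_mem
    (Submodule.smul_mem _ a (mul_mem_polyFunLT hlower (coord_mem_polyFunLT i)))
    (Submodule.smul_mem _ (b i) hcomp)
  convert hsplit using 1
  ext x
  simp only [Pi.add_apply, Pi.sub_apply, Pi.mul_apply, Pi.smul_apply, smul_eq_mul]
  ring

lemma comp_affine_sub_mem_polyFunLT (a : R) (b : σ → R) {k : ℕ} {f : (σ → R) → R}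
    (hf : f ∈ polyFunLT σ R (k + 1)) :
    (fun x => f (a • x + b)) - a ^ k • f ∈ polyFunLT σ R k := by
  suffices hle : ∀ k, polyFunLT σ R (k + 1) ≤ (polyFunLT σ R k).comap
      (LinearMap.funLeft R R (fun x : σ → R => a • x + b) - a ^ k • LinearMap.id) from hle k hf
  intro k
  induction k with
  | zero =>
    refine polyFunLT_le_iff.mpr fun s hs => ?_
    obtain rfl : s = 0 := (Finsupp.degree_eq_zero_iff s).mp (by omega)
    rw [Submodule.mem_comap, monomialFun_zero]
    convert Submodule.zero_mem _
    ext x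
    simp [LinearMap.funLeft_apply]
  | succ k ih =>
    refine polyFunLT_le_iff.mpr fun s hs => ?_
    rcases eq_or_ne s 0 with rfl | hs0
    · rw [Submodule.mem_comap, monomialFun_zero]
      convert const_mem_polyFunLT k (1 - a ^ (k + 1)) using 1
      ext x
      simp [LinearMap.funLeft_apply]
    · obtain ⟨t, i, rfl⟩ := exists_eq_add_single_one hs0
      rw [map_add, Finsupp.degree_single] at hs
      have ht : monomialFun t ∈ polyFunLT σ R (k + 1) := monomialFun_mem_polyFunLT (by omega)
      rw [monomialFun_add, monomialFun_single_one]
      exact comp_affine_mul_coord_sub_mem_polyFunLT a b ht (ih ht) i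

lemma comp_affine_mem_polyFunLT (a : R) (b : σ → R) {k : ℕ} {f : (σ → R) → R}
    (hf : f ∈ polyFunLT σ R k) : (fun x => f (a • x + b)) ∈ polyFunLT σ R k := by
  cases k with
  | zero =>
    rw [eq_zero_of_mem_polyFunLT_zero hf]
    exact Submodule.zero_mem _
  | succ k =>
    have hlower := polyFunLT_mono k.le_succ (comp_affine_sub_mem_polyFunLT a b hf)
    simpa only [sub_add_cancel] using add_mem hlower (Submodule.smul_mem _ (a ^ k) hf)

instance finiteDimensional_polyFunLT {K : Type*} [Field K] (k : ℕ) :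
    FiniteDimensional K (polyFunLT σ K k) :=
  FiniteDimensional.span_of_finite K ((Finsupp.finite_of_degree_lt k).image _)

end PolynomialFunctions

section RandomFunctions

variable {α Ω Ω' : Type*} [MeasurableSpace Ω] [MeasurableSpace Ω'] {μ : Measure Ω} {ν : Measure Ω'}
  {V : Submodule ℝ (α → ℝ)} [FiniteDimensional ℝ V] {F : Ω → V}

-- In finite dimension the evaluations at points span the dual, since they separate functions.
lemma memLp_dual_apply {r : ENNReal} (hF : ∀ x, MemLp (fun ω => (F ω : α → ℝ) x) r μ)
    (φ : Module.Dual ℝ V) : MemLp (fun ω => φ (F ω)) r μ := by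
  let evalAt (x : α) : Module.Dual ℝ V := LinearMap.proj x ∘ₗ V.subtype
  have hφ : φ ∈ Submodule.span ℝ (Set.range evalAt) := by
    refine FiniteDimensional.mem_span_of_iInf_ker_le_ker fun f hf => ?_
    have hf0 : f = 0 := Subtype.ext <| funext fun x => (Submodule.mem_iInf _).mp hf x
    rw [hf0]
    exact Submodule.zero_mem _
  induction hφ using Submodule.span_induction with
  | mem φ h => obtain ⟨x, rfl⟩ := h; exact hF x
  | zero => exact MemLp.zero'
  | add φ ψ _ _ hφ hψ => exact hφ.add hψ
  | smul a φ _ hφ => exact hφ.const_mul a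

lemma coe_eq_sum_finBasis_repr (f : V) (x : α) :
    (f : α → ℝ) x = ∑ i, (Module.finBasis ℝ V).repr f i * (Module.finBasis ℝ V i : α → ℝ) x := by
  conv_lhs => rw [← (Module.finBasis ℝ V).sum_repr f]
  simp only [Submodule.coe_sum, Submodule.coe_smul, Finset.sum_apply, Pi.smul_apply, smul_eq_mul]

lemma integral_mem_of_finiteDimensional (hF : ∀ x, Integrable (fun ω => (F ω : α → ℝ) x) μ) :
    (fun x => ∫ ω, (F ω : α → ℝ) x ∂μ) ∈ V := by
  have hcoord (i) : Integrable (fun ω => (Module.finBasis ℝ V).repr (F ω) i) μ :=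
    memLp_one_iff_integrable.mp <| memLp_dual_apply
      (fun x => memLp_one_iff_integrable.mpr (hF x)) ((Module.finBasis ℝ V).coord i)
  have hexpand : (fun x => ∫ ω, (F ω : α → ℝ) x ∂μ) =
      ∑ i, (∫ ω, (Module.finBasis ℝ V).repr (F ω) i ∂μ) • (Module.finBasis ℝ V i : α → ℝ) := by
    ext x
    simp_rw [coe_eq_sum_finBasis_repr (F _) x]
    rw [integral_finsetSum _ fun i _ => (hcoord i).mul_const _]
    simp [integral_mul_const]
  rw [hexpand]
  exact Submodule.sum_mem _ fun i _ => Submodule.smul_mem _ _ (Subtype.prop _)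

lemma memLp_two_mul_prod [SFinite μ] [SFinite ν] {f : Ω → ℝ} {g : Ω' → ℝ} (hf : MemLp f 2 μ)
    (hg : MemLp g 2 ν) : MemLp (fun z : Ω × Ω' => f z.1 * g z.2) 2 (μ.prod ν) := by
  refine (memLp_two_iff_integrable_sq (hf.1.comp_fst.mul hg.1.comp_snd)).mpr ?_
  simpa only [Pi.mul_apply, mul_pow] using hf.integrable_sq.mul_prod hg.integrable_sq

lemma memLp_two_apply_prod [SFinite μ] [SFinite ν] {g : Ω' → α}
    (hF : ∀ x, MemLp (fun ω => (F ω : α → ℝ) x) 2 μ)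
    (hg : ∀ f ∈ V, MemLp (fun ω' => f (g ω')) 2 ν) :
    MemLp (fun z : Ω × Ω' => (F z.1 : α → ℝ) (g z.2)) 2 (μ.prod ν) := by
  simp_rw [fun z : Ω × Ω' => coe_eq_sum_finBasis_repr (F z.1) (g z.2)]
  exact memLp_finsetSum _ fun i _ => memLp_two_mul_prod
    (memLp_dual_apply hF ((Module.finBasis ℝ V).coord i)) (hg _ (Subtype.prop _))

end RandomFunctions

section Gaussian

variable {n k : ℕ} {f : (Fin n → ℝ) → ℝ}

instance isProbabilityMeasure_stdGaussian (n : ℕ) : IsProbabilityMeasure (stdGaussian n) := by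
  unfold _root_.stdGaussian
  infer_instance

lemma integrable_monomialFun_stdGaussian (s : Fin n →₀ ℕ) :
    Integrable (monomialFun s) (stdGaussian n) :=
  Integrable.fintype_prod (f := fun i (y : ℝ) => y ^ s i) fun i => by
    have hpow := (memLp_id_gaussianReal (μ := 0) (v := 1) (s i)).integrable_norm_pow'
    exact hpow.mono' (by fun_prop) (by simp)

lemma memLp_two_stdGaussian_of_mem_polyFunLT (hf : f ∈ polyFunLT (Fin n) ℝ k) :
    MemLp f 2 (stdGaussian n) := by
  induction hf using Submodule.span_induction with
  | mem f h =>
    obtain ⟨s, -, rfl⟩ := h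
    have hsq := integrable_monomialFun_stdGaussian (s + s)
    rw [monomialFun_add, ← sq] at hsq
    exact (memLp_two_iff_integrable_sq (integrable_monomialFun_stdGaussian s).1).mpr hsq
  | zero => exact MemLp.zero
  | add f g _ _ hf hg => exact hf.add hg
  | smul a f _ hf => exact hf.const_smul a

lemma memLp_two_comp_noisy (θ : ℝ) (hf : f ∈ polyFunLT (Fin n) ℝ k) (X : Fin n → ℝ) :
    MemLp (fun Y => f (noisy θ Y X)) 2 (stdGaussian n) := by
  simp_rw [noisy, add_comm (Real.cos θ • X)]
  exact memLp_two_stdGaussian_of_mem_polyFunLT (comp_affine_mem_polyFunLT _ _ hf)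

lemma integrable_comp_noisy (θ : ℝ) (hf : f ∈ polyFunLT (Fin n) ℝ k) (X : Fin n → ℝ) :
    Integrable (fun Y => f (noisy θ Y X)) (stdGaussian n) :=
  (memLp_two_comp_noisy θ hf X).integrable one_le_two

end Gaussian

section NoisyDerivative

variable {n k : ℕ} {f : (Fin n → ℝ) → ℝ}

lemma noisyDeriv_mem_polyFunLT (θ : ℝ) (Y Z : Fin n → ℝ) (hf : f ∈ polyFunLT (Fin n) ℝ k) :
    noisyDeriv θ Y Z f ∈ polyFunLT (Fin n) ℝ k := by
  have h := Submodule.smul_mem _ θ⁻¹ <| sub_mem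
    (comp_affine_mem_polyFunLT (Real.cos θ) (Real.sin θ • Y) hf)
    (comp_affine_mem_polyFunLT (Real.cos θ) (Real.sin θ • Z) hf)
  convert h using 1
  ext X
  simp [noisyDeriv, noisy, div_eq_inv_mul]

lemma memLp_two_noisyDeriv (θ : ℝ) (hf : f ∈ polyFunLT (Fin n) ℝ k) (X : Fin n → ℝ) :
    MemLp (fun YZ : (Fin n → ℝ) × (Fin n → ℝ) => noisyDeriv θ YZ.1 YZ.2 f X) 2
      ((stdGaussian n).prod (stdGaussian n)) := by
  have hnoisy := memLp_two_comp_noisy θ hf X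
  simpa only [noisyDeriv, div_eq_mul_inv, Pi.sub_apply] using
    ((hnoisy.comp_fst (stdGaussian n)).sub (hnoisy.comp_snd (stdGaussian n))).mul_const θ⁻¹

lemma memLp_two_noisyDeriv_prod (θ : ℝ) {Ω : Type*} [MeasurableSpace Ω] {μ : Measure Ω} [SFinite μ]
    {F : Ω → polyFunLT (Fin n) ℝ k}
    (hF : ∀ X, MemLp (fun ω => (F ω : (Fin n → ℝ) → ℝ) X) 2 μ) (X : Fin n → ℝ) :
    MemLp (fun z : Ω × (Fin n → ℝ) × (Fin n → ℝ) => noisyDeriv θ z.2.1 z.2.2 (F z.1) X) 2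
      (μ.prod ((stdGaussian n).prod (stdGaussian n))) := by
  have hY := memLp_two_apply_prod hF fun f hf =>
    (memLp_two_comp_noisy θ hf X).comp_fst (stdGaussian n)
  have hZ := memLp_two_apply_prod hF fun f hf =>
    (memLp_two_comp_noisy θ hf X).comp_snd (stdGaussian n)
  simpa only [noisyDeriv, div_eq_mul_inv, Pi.sub_apply] using (hY.sub hZ).mul_const θ⁻¹

-- Letting the function itself be random turns the iterated integral defining `derivNormSq` into a
-- single integral over a product space, which is what makes the induction on `ℓ` go through.
lemma integrable_derivNormSq (θ : ℝ) (ℓ : ℕ) {Ω : Type*} [MeasurableSpace Ω] {μ : Measure Ω}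
    [SFinite μ] {F : Ω → polyFunLT (Fin n) ℝ k}
    (hF : ∀ X, MemLp (fun ω => (F ω : (Fin n → ℝ) → ℝ) X) 2 μ) (X : Fin n → ℝ) :
    Integrable (fun ω => derivNormSq n θ ℓ (F ω) X) μ := by
  induction ℓ generalizing Ω with
  | zero => exact (hF X).integrable_sq
  | succ ℓ ih =>
    exact (ih (F := fun z : Ω × (Fin n → ℝ) × (Fin n → ℝ) =>
      ⟨_, noisyDeriv_mem_polyFunLT θ z.2.1 z.2.2 (F z.1).2⟩)
      (memLp_two_noisyDeriv_prod θ hF)).integral_prod_left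

lemma derivNormSq_mem_polyFunLT (θ : ℝ) (ℓ : ℕ) (hf : f ∈ polyFunLT (Fin n) ℝ (k + 1)) :
    derivNormSq n θ ℓ f ∈ polyFunLT (Fin n) ℝ (2 * k + 1) := by
  induction ℓ generalizing f with
  | zero =>
    have h := mul_mem_polyFunLT hf hf
    rw [← sq, show k + 1 + k = 2 * k + 1 by ring] at h
    exact h
  | succ ℓ ih =>
    let DF (YZ : (Fin n → ℝ) × (Fin n → ℝ)) : polyFunLT (Fin n) ℝ (k + 1) :=
      ⟨noisyDeriv θ YZ.1 YZ.2 f, noisyDeriv_mem_polyFunLT θ YZ.1 YZ.2 hf⟩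
    let normSqDF (YZ : (Fin n → ℝ) × (Fin n → ℝ)) : polyFunLT (Fin n) ℝ (2 * k + 1) :=
      ⟨derivNormSq n θ ℓ (DF YZ), ih (DF YZ).2⟩
    exact integral_mem_of_finiteDimensional (F := normSqDF)
      (integrable_derivNormSq θ ℓ (F := DF) (memLp_two_noisyDeriv θ hf))

end NoisyDerivative

section Averaging

variable {n k : ℕ} {f g : (Fin n → ℝ) → ℝ}

lemma avgOp_sub (θ : ℝ) (hf : f ∈ polyFunLT (Fin n) ℝ k) (hg : g ∈ polyFunLT (Fin n) ℝ k) :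
    avgOp n θ (f - g) = avgOp n θ f - avgOp n θ g :=
  funext fun X => integral_sub (integrable_comp_noisy θ hf X) (integrable_comp_noisy θ hg X)

lemma avgOp_smul (θ a : ℝ) (f : (Fin n → ℝ) → ℝ) : avgOp n θ (a • f) = a • avgOp n θ f :=
  funext fun _ => integral_const_mul a _

lemma avgOp_const (θ v : ℝ) : avgOp n θ (fun _ => v) = fun _ => v := by
  ext X
  simp [avgOp]

lemma avgOp_sub_cos_pow_smul_mem_polyFunLT (θ : ℝ) (hf : f ∈ polyFunLT (Fin n) ℝ (k + 1)) :
    avgOp n θ f - Real.cos θ ^ k • f ∈ polyFunLT (Fin n) ℝ k := by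
  have hint (X : Fin n → ℝ) := integrable_comp_noisy θ hf X
  have h := integral_mem_of_finiteDimensional (μ := stdGaussian n)
    (F := fun Y => ⟨_, comp_affine_sub_mem_polyFunLT (Real.cos θ) (Real.sin θ • Y) hf⟩)
    fun X => (hint X).sub (integrable_const _)
  convert h using 1
  ext X
  exact ((integral_sub (hint X) (integrable_const _)).trans (by simp [avgOp])).symm

lemma avgOp_mem_polyFunLT (θ : ℝ) (hf : f ∈ polyFunLT (Fin n) ℝ k) :
    avgOp n θ f ∈ polyFunLT (Fin n) ℝ k :=
  integral_mem_of_finiteDimensional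
    (F := fun Y => ⟨_, comp_affine_mem_polyFunLT (Real.cos θ) (Real.sin θ • Y) hf⟩)
    (integrable_comp_noisy θ hf)

lemma avgOp_iterate_mem_polyFunLT (θ : ℝ) (hf : f ∈ polyFunLT (Fin n) ℝ k) (j : ℕ) :
    (avgOp n θ)^[j] f ∈ polyFunLT (Fin n) ℝ k := by
  induction j with
  | zero => exact hf
  | succ j ih => rw [Function.iterate_succ_apply']; exact avgOp_mem_polyFunLT θ ih

lemma avgOp_iterate_sub (θ : ℝ) (hf : f ∈ polyFunLT (Fin n) ℝ k)
    (hg : g ∈ polyFunLT (Fin n) ℝ k) (j : ℕ) :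
    (avgOp n θ)^[j] (f - g) = (avgOp n θ)^[j] f - (avgOp n θ)^[j] g := by
  induction j with
  | zero => rfl
  | succ j ih =>
    simp only [Function.iterate_succ_apply', ih]
    exact avgOp_sub θ (avgOp_iterate_mem_polyFunLT θ hf j) (avgOp_iterate_mem_polyFunLT θ hg j)

lemma avgOp_iterate_smul (θ a : ℝ) (f : (Fin n → ℝ) → ℝ) (j : ℕ) :
    (avgOp n θ)^[j] (a • f) = a • (avgOp n θ)^[j] f :=
  Function.Commute.iterate_left (avgOp_smul θ a) j f

lemma avgOp_iterate_const (θ v : ℝ) (j : ℕ) : (avgOp n θ)^[j] (fun _ => v) = fun _ => v :=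
  Function.iterate_fixed (avgOp_const θ v) j

end Averaging

section Extrapolation

variable {n k : ℕ} {θ : ℝ} {f : (Fin n → ℝ) → ℝ} {X : Fin n → ℝ}

lemma one_half_le_cos_pow (h : k * θ ^ 2 ≤ 1) : 1 / 2 ≤ Real.cos θ ^ k := by
  have hbernoulli :=
    one_add_mul_le_pow (a := Real.cos θ - 1) (by linarith [Real.neg_one_le_cos θ]) k
  have hcos : -(θ ^ 2 / 2) ≤ Real.cos θ - 1 := by linarith [Real.one_sub_sq_div_two_le_cos (x := θ)]
  have hmul := mul_le_mul_of_nonneg_left hcos k.cast_nonneg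
  rw [add_sub_cancel] at hbernoulli
  linarith

lemma abs_le_of_abs_avgOp_iterate_le (hθ : k * θ ^ 2 ≤ 1) (hf : f ∈ polyFunLT (Fin n) ℝ k) {E : ℝ}
    (hE : ∀ j, 1 ≤ j → j ≤ k → |(avgOp n θ)^[j] f X| ≤ E) : |f X| ≤ (4 ^ k - 1) * E := by
  induction k generalizing f E with
  | zero => simp [eq_zero_of_mem_polyFunLT_zero hf]
  | succ k ih =>
    have hk : k * θ ^ 2 ≤ 1 := by push_cast at hθ; linarith [sq_nonneg θ]
    set c := Real.cos θ ^ k with hc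
    have hc_ge : 1 / 2 ≤ c := one_half_le_cos_pow hk
    have hc_le : c ≤ 1 := (le_abs_self c).trans <| by
      rw [hc, abs_pow]
      exact pow_le_one₀ (abs_nonneg _) (Real.abs_cos_le_one θ)
    have hbound (a b : ℝ) : |a - c * b| ≤ |a| + c * |b| := by
      simpa only [abs_mul, abs_of_pos (by linarith : 0 < c)] using abs_sub a (c * b)
    have hAf : |avgOp n θ f X| ≤ E := hE 1 le_rfl (by omega)
    have hlower : |avgOp n θ f X - c * f X| ≤ (4 ^ k - 1) * (2 * E) := by
      refine ih hk (avgOp_sub_cos_pow_smul_mem_polyFunLT θ hf) fun j hj1 hjk => ?_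
      rw [avgOp_iterate_sub θ (avgOp_mem_polyFunLT θ hf) (Submodule.smul_mem _ _ hf),
        avgOp_iterate_smul, ← Function.iterate_succ_apply]
      have hj := hE j hj1 (by omega)
      have hj_succ := hE (j + 1) (by omega) (by omega)
      have hcj := mul_le_of_le_one_left (abs_nonneg ((avgOp n θ)^[j] f X)) hc_le
      exact (hbound _ _).trans (by linarith)
    have hcf : c * |f X| ≤ E + (4 ^ k - 1) * (2 * E) := by
      rw [← abs_of_pos (by linarith : 0 < c), ← abs_mul]
      linarith [abs_sub_abs_le_abs_sub (c * f X) (avgOp n θ f X),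
        abs_sub_comm (c * f X) (avgOp n θ f X)]
    have hhalf := mul_le_mul_of_nonneg_right hc_ge (abs_nonneg (f X))
    rw [pow_succ]
    linarith [abs_nonneg (avgOp n θ f X)]

end Extrapolation

section Comparison

lemma abs_sub_le_of_abs_log_sub_log_le {a b ε : ℝ} (ha : 0 < a) (hb : 0 < b) (hε : ε ≤ 1)
    (h : |Real.log b - Real.log a| ≤ ε) : |b - a| ≤ 2 * ε * a := by
  have hexp := Real.abs_exp_sub_one_le (h.trans hε)
  rw [Real.exp_sub, Real.exp_log ha, Real.exp_log hb] at hexp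
  have hba : b - a = (b / a - 1) * a := by field_simp
  rw [hba, abs_mul, abs_of_pos ha]
  gcongr
  linarith

lemma abs_log_sub_log_le_of_abs_log_div_le {q : ℕ → ℝ} {N : ℕ} {η : ℝ} (hη : 0 ≤ η)
    (hpos : ∀ m, 1 ≤ m → m ≤ N + 1 → 0 < q m)
    (hlog : ∀ m, 1 ≤ m → m ≤ N → |Real.log (q m / q (m + 1))| ≤ η) {m : ℕ} (hm : 1 ≤ m)
    (hmN : m ≤ N + 1) : |Real.log (q m) - Real.log (q 1)| ≤ N * η := by
  have hstep {i : ℕ} (hi : 1 ≤ i) (him : i < m) :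
      dist (Real.log (q i)) (Real.log (q (i + 1))) ≤ η := by
    rw [Real.dist_eq, ← Real.log_div (hpos _ hi (by omega)).ne' (hpos _ (by omega) (by omega)).ne']
    exact hlog i hi (by omega)
  have hcast : ((m - 1 : ℕ) : ℝ) ≤ N := by exact_mod_cast (by omega : m - 1 ≤ N)
  calc |Real.log (q m) - Real.log (q 1)| = dist (Real.log (q 1)) (Real.log (q m)) := by
        rw [dist_comm, Real.dist_eq]
    _ ≤ ∑ _i ∈ Finset.Ico 1 m, η :=
        dist_le_Ico_sum_of_dist_le (f := fun i => Real.log (q i)) hm hstep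
    _ = (m - 1 : ℕ) * η := by simp
    _ ≤ N * η := by gcongr

variable {n k N : ℕ} {θ η : ℝ} {f : (Fin n → ℝ) → ℝ} {X : Fin n → ℝ}

lemma abs_avgOp_iterate_sub_le_half (hkN : k ≤ N) (hθ : (k + 1) * θ ^ 2 ≤ 1)
    (hf : f ∈ polyFunLT (Fin n) ℝ (k + 1)) (hη : 0 ≤ η) (hηN : 4 ^ (k + 2) * (N * η) ≤ 1)
    (hpos : ∀ m, 1 ≤ m → m ≤ N + 1 → 0 < (avgOp n θ)^[m] f X)
    (hlog : ∀ m, 1 ≤ m → m ≤ N →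
      |Real.log ((avgOp n θ)^[m] f X / (avgOp n θ)^[m + 1] f X)| ≤ η)
    {m : ℕ} (hm : m ≤ N + 1) :
    |(avgOp n θ)^[m] f X - (avgOp n θ)^[1] f X| ≤ 1 / 2 * (avgOp n θ)^[1] f X := by
  set v := (avgOp n θ)^[1] f X with hv
  have hv_pos : 0 < v := hpos 1 le_rfl (by omega)
  have hNη : 0 ≤ N * η := by positivity
  have hpow : (16 : ℝ) ≤ 4 ^ (k + 2) := by
    rw [pow_add]
    linarith [one_le_pow₀ (by norm_num : (1 : ℝ) ≤ 4) (n := k)]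
  have hNη_le : N * η ≤ 1 / 16 := by linarith [mul_le_mul_of_nonneg_right hpow hNη]
  have hclose (m : ℕ) (hm : 1 ≤ m) (hmN : m ≤ N + 1) :
      |(avgOp n θ)^[m] f X - v| ≤ 2 * (N * η) * v :=
    abs_sub_le_of_abs_log_sub_log_le hv_pos (hpos m hm hmN) (by linarith)
      (abs_log_sub_log_le_of_abs_log_div_le (q := fun m => (avgOp n θ)^[m] f X)
        hη hpos hlog hm hmN)
  have hconst := const_mem_polyFunLT (σ := Fin n) k v
  have hzero : |f X - v| ≤ (4 ^ (k + 1) - 1) * (2 * (N * η) * v) := by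
    refine abs_le_of_abs_avgOp_iterate_le (f := f - fun _ => v) (by exact_mod_cast hθ)
      (sub_mem hf hconst) fun j hj1 hjk => ?_
    rw [avgOp_iterate_sub θ hf hconst, avgOp_iterate_const]
    exact hclose j hj1 (by omega)
  rcases Nat.eq_zero_or_pos m with rfl | hm_pos
  · refine hzero.trans ?_
    rw [← mul_assoc]
    gcongr
    rw [pow_succ] at hηN
    linarith
  · refine (hclose m hm_pos hm).trans ?_
    gcongr
    linarith

lemma avgOp_iterate_le_three_mul (hkN : k ≤ N) (hθ : (k + 1) * θ ^ 2 ≤ 1)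
    (hf : f ∈ polyFunLT (Fin n) ℝ (k + 1)) (hη : 0 ≤ η) (hηN : 4 ^ (k + 2) * (N * η) ≤ 1)
    (hpos : ∀ m, 1 ≤ m → m ≤ N + 1 → 0 < (avgOp n θ)^[m] f X)
    (hlog : ∀ m, 1 ≤ m → m ≤ N →
      |Real.log ((avgOp n θ)^[m] f X / (avgOp n θ)^[m + 1] f X)| ≤ η)
    {m m' : ℕ} (hm : m ≤ N + 1) (hm' : m' ≤ N + 1) :
    (avgOp n θ)^[m] f X ≤ 3 * (avgOp n θ)^[m'] f X := by
  have h := abs_le.mp (abs_avgOp_iterate_sub_le_half hkN hθ hf hη hηN hpos hlog hm)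
  have h' := abs_le.mp (abs_avgOp_iterate_sub_le_half hkN hθ hf hη hηN hpos hlog hm')
  linarith [h.2, h'.1]

end Comparison

lemma four_pow_mul_pow_le_one {d : ℕ} (hd : d ≠ 0) :
    (4 : ℝ) ^ (2 * d + 2) * ((4 * d : ℕ) * (1 / 2048) ^ d) ≤ 1 := by
  have hd_le : (d : ℝ) ≤ 2 ^ d := by exact_mod_cast Nat.lt_two_pow_self.le
  calc (4 : ℝ) ^ (2 * d + 2) * ((4 * d : ℕ) * (1 / 2048) ^ d)
      = 64 * (d * (4 ^ 2 * (1 / 2048)) ^ d) := by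
        push_cast [mul_pow, pow_add, ← pow_mul]; ring
    _ ≤ 64 * (2 ^ d * (4 ^ 2 * (1 / 2048)) ^ d) := by gcongr
    _ = 64 * (1 / 64) ^ d := by rw [← mul_pow]; norm_num
    _ ≤ 64 * (1 / 64) := by gcongr; exact pow_le_of_le_one (by norm_num) (by norm_num) hd
    _ = 1 := by norm_num

/-- If the consecutive ratios `q_{ℓ,m}/q_{ℓ,m+1}` for `1 ≤ m ≤ 4d` are within
multiplicative error `e^{±α^d}` of one, then all `q_{ℓ,m}`, `0 ≤ m ≤ 4d+1`, are
within constant multiples of each other. -/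
theorem stmt15 :
    ∃ α ∈ Set.Ioo (0:ℝ) 1, ∃ K > (1:ℝ),
      ∀ d : ℕ, 0 < d → ∃ θ₀ > (0:ℝ),
        ∀ θ : ℝ, 0 < θ → θ ≤ θ₀ →
          ∀ (n : ℕ) (p : MvPolynomial (Fin n) ℝ), p.totalDegree ≤ d →
            ∀ (X : Fin n → ℝ) (ℓ : ℕ),
              (∀ m : ℕ, 1 ≤ m → m ≤ 4*d →
                0 < qlm n θ p ℓ m X ∧ 0 < qlm n θ p ℓ (m+1) X ∧
                |Real.log (qlm n θ p ℓ m X / qlm n θ p ℓ (m+1) X)| < α ^ d) →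
              ∀ m m' : ℕ, m ≤ 4*d+1 → m' ≤ 4*d+1 →
                qlm n θ p ℓ m X ≤ K * qlm n θ p ℓ m' X := by
  refine ⟨1 / 2048, by norm_num, 3, by norm_num, fun d hd => ⟨1 / (2 * d + 1), by positivity, ?_⟩⟩
  intro θ hθ hθ_le n p hp X ℓ hratio m m' hm hm'
  have hθ_sq : ((2 * d : ℕ) + 1) * θ ^ 2 ≤ 1 := by
    have hmul : (2 * d + 1) * θ ≤ 1 := (le_div_iff₀' (by positivity)).mp hθ_le
    have hθ_one : θ ≤ 1 := hθ_le.trans (div_le_one_of_le₀ (by linarith) (by positivity))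
    push_cast
    nlinarith
  have hpos (i : ℕ) (hi : 1 ≤ i) (hi' : i ≤ 4 * d + 1) : 0 < qlm n θ p ℓ i X := by
    rcases hi'.lt_or_eq with h | rfl
    · exact (hratio i hi (by omega)).1
    · exact (hratio (4 * d) (by omega) le_rfl).2.1
  exact avgOp_iterate_le_three_mul (by omega) hθ_sq
    (derivNormSq_mem_polyFunLT θ ℓ (eval_mem_polyFunLT (Nat.lt_succ_of_le hp)))
    (by positivity) (four_pow_mul_pow_le_one hd.ne') hpos (fun i hi hi' => (hratio i hi hi').2.2.le)
    hm hm'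
end
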